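/- Let f, g ∈ ℂ[T] be nonconstant multiplicatively independent polynomials. Then there exists a nonzero polynomial h ∈ ℂ[T] such that gcd(fⁿ − 1, gᵐ − 1) divides h for all integers n, m ≥ 1. -/

import Mathlib

open Polynomial

/-!
If `f(a)` and `g(a)` are roots of unity, then `|f(a)| = |g(a)| = 1`, so the point
`(a, conj a)` lies on both curves `f(z) f̄(w) = 1` and `g(z) ḡ(w) = 1`. After replacing `f` and `g`
by powers we may assume that they have the same degree. If there are infinitely many such `a`, these
points have a generic point `(z, w)` in an ultrapower of `ℂ`, and `g(z) f̄(w) = g(z) / f(z)` is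
bounded at every place of `ℂ(z, w)`: poles can occur only where `z` or `w` has one, and there
polynomials of equal degree have equal valuation. Hence `g / f` is a constant, which is a root of
unity, contradicting multiplicative independence.

So only finitely many `a` can be roots of `gcd(fⁿ - 1, gᵐ - 1)`, and their multiplicities are
bounded independently of `n`: if `f(a)ⁿ = 1`, the cofactor of `f - f(a)` in
`fⁿ - 1 = fⁿ - f(a)ⁿ` takes the value `n f(a)ⁿ⁻¹ ≠ 0` at `a`.
-/

/-- Two elements are multiplicatively dependent if some nontrivial monomial in them, with integer
exponents, equals `1`. -/
def MultiplicativelyDependent {G : Type*} [DivInvMonoid G] (x y : G) : Prop :=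
  ∃ ν₁ ν₂ : ℤ, (ν₁, ν₂) ≠ (0, 0) ∧ x ^ ν₁ * y ^ ν₂ = 1

theorem MultiplicativelyDependent.of_pow_eq_pow {G : Type*} [GroupWithZero G] {x y : G} {i j : ℕ}
    (hy : y ≠ 0) (hi : i ≠ 0) (h : x ^ i = y ^ j) : MultiplicativelyDependent x y := by
  refine ⟨i, -j, by simp [hi], ?_⟩
  rw [zpow_neg, zpow_natCast, zpow_natCast, h, mul_inv_cancel₀ (pow_ne_zero j hy)]

section Valuation

variable {k K Γ : Type*} [CommRing k] [CommRing K] [Algebra k K]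
  [LinearOrderedCommGroupWithZero Γ] (v : Valuation K Γ) [v.IsTrivialOn k]

theorem valuation_aeval_le_one {z : K} (hz : v z ≤ 1) (p : k[X]) : v (aeval z p) ≤ 1 := by
  rw [aeval_eq_sum_range]
  refine v.map_sum_le fun i _ ↦ ?_
  rw [Algebra.smul_def, map_mul, map_pow]
  exact mul_le_one' (Valuation.IsTrivialOn.valuation_algebraMap_le_one v _) (pow_le_one' hz i)

theorem valuation_aeval_eq_of_natDegree_eq {z : K} (hz : 1 < v z) {p q : k[X]} (hp : p ≠ 0)
    (hq : q ≠ 0) (hpq : p.natDegree = q.natDegree) : v (aeval z p) = v (aeval z q) := by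
  rw [valuation_aeval_eq_valuation_X_pow_natDegree_of_one_lt_valuation_X z hz hp, hpq,
    valuation_aeval_eq_valuation_X_pow_natDegree_of_one_lt_valuation_X z hz hq]

theorem valuation_aeval_mul_aeval_le_one {z w : K} {f g f' g' : k[X]}
    (hfg : f.natDegree = g.natDegree) (hfg' : f'.natDegree = g'.natDegree)
    (hf : aeval z f * aeval w f' = 1) (hg : aeval z g * aeval w g' = 1) :
    v (aeval z g * aeval w f') ≤ 1 := by
  have hf₀ : f ≠ 0 := by rintro rfl; simpa using congrArg v hf
  have hg₀ : g ≠ 0 := by rintro rfl; simpa using congrArg v hg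
  have hf'₀ : f' ≠ 0 := by rintro rfl; simpa using congrArg v hf
  have hg'₀ : g' ≠ 0 := by rintro rfl; simpa using congrArg v hg
  rw [map_mul]
  rcases lt_or_ge 1 (v z) with hz | hz
  · rw [← valuation_aeval_eq_of_natDegree_eq v hz hf₀ hg₀ hfg, ← map_mul, hf, map_one]
  rcases lt_or_ge 1 (v w) with hw | hw
  · rw [valuation_aeval_eq_of_natDegree_eq v hw hf'₀ hg'₀ hfg', ← map_mul, hg, map_one]
  exact mul_le_one' (valuation_aeval_le_one v hz g) (valuation_aeval_le_one v hw f')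

end Valuation

section FieldExtension

variable {k K : Type*} [Field k] [Field K] [Algebra k K]

theorem isIntegral_of_forall_valuation_le_one {x : K}
    (h : ∀ V : ValuationSubring K, V.valuation.IsTrivialOn k → V.valuation x ≤ 1) :
    IsIntegral k x := by
  by_contra hx
  obtain ⟨V, hV, hxV⟩ := Subring.exists_le_valuationSubring_of_isIntegrallyClosedIn
    (R := (integralClosure k K).toSubring) hx
  refine hxV ((V.valuation_le_one_iff x).1 (h V (.of_le_one _ fun c ↦ ?_)))
  exact (V.valuation_le_one_iff _).2 (hV ((integralClosure k K).algebraMap_mem c))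

variable {z w : K} {f g f' g' : k[X]}

theorem isIntegral_aeval_mul_aeval
    (hfg : f.natDegree = g.natDegree) (hfg' : f'.natDegree = g'.natDegree)
    (hf : aeval z f * aeval w f' = 1) (hg : aeval z g * aeval w g' = 1) :
    IsIntegral k (aeval z g * aeval w f') :=
  isIntegral_of_forall_valuation_le_one fun V _ ↦
    valuation_aeval_mul_aeval_le_one V.valuation hfg hfg' hf hg

theorem exists_aeval_eq_aeval_C_mul [IsAlgClosed k]
    (hfg : f.natDegree = g.natDegree) (hfg' : f'.natDegree = g'.natDegree)
    (hf : aeval z f * aeval w f' = 1) (hg : aeval z g * aeval w g' = 1) :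
    ∃ c : k, aeval z g = aeval z (C c * f) := by
  obtain ⟨c, hc⟩ := minpoly.mem_range_of_degree_eq_one k _
    (IsAlgClosed.degree_eq_one_of_irreducible k
      (minpoly.irreducible (isIntegral_aeval_mul_aeval hfg hfg' hf hg)))
  refine ⟨c, ?_⟩
  calc aeval z g = aeval z g * aeval w f' * aeval z f := by
        rw [mul_assoc, mul_comm (aeval w f'), hf, mul_one]
    _ = aeval z (C c * f) := by rw [← hc, map_mul, aeval_C]

end FieldExtension

section Germ

variable {α R A : Type*} [CommSemiring R] [Semiring A] [Algebra R A] (l : Filter α)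

/-- Germs of functions with values in an `R`-algebra form an `R`-algebra: the structure map sends
`r` to the germ of the constant function with value `r`. -/
instance germAlgebra : Algebra R (l.Germ A) where
  algebraMap := (Filter.Germ.coeRingHom l).comp (algebraMap R (α → A))
  commutes' r x := x.inductionOn fun y ↦ congrArg _ (Algebra.commutes r y)
  smul_def' r x := x.inductionOn fun y ↦ congrArg _ (Algebra.smul_def r y)

/-- Taking germs along `l`, as an algebra homomorphism. -/
def germAlgHom : (α → A) →ₐ[R] l.Germ A where
  __ := Filter.Germ.coeRingHom l
  commutes' _ := rfl

theorem aeval_germ (x : α → A) (p : R[X]) :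
    aeval (x : l.Germ A) p = ((fun a ↦ aeval (x a) p : α → A) : l.Germ A) := by
  rw [← aeval_pi_apply]
  exact aeval_algHom_apply (germAlgHom l) x p

end Germ

theorem exists_eq_C_mul_of_infinite_eval_mul_eval_eq_one {k : Type*} [Field k] [IsAlgClosed k]
    {f g f' g' : k[X]} (hfg : f.natDegree = g.natDegree) (hfg' : f'.natDegree = g'.natDegree)
    {S : Set k} (hS : S.Infinite) (σ : k → k) (hf : ∀ a ∈ S, f.eval a * f'.eval (σ a) = 1)
    (hg : ∀ a ∈ S, g.eval a * g'.eval (σ a) = 1) : ∃ c : k, g = C c * f := by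
  have : Infinite S := hS.to_subtype
  let U : Ultrafilter S := Filter.hyperfilter S
  let z : (U : Filter S).Germ k := ((fun a ↦ a : S → k) : (U : Filter S).Germ k)
  let w : (U : Filter S).Germ k := ((fun a ↦ σ a : S → k) : (U : Filter S).Germ k)
  have aeval_mul_aeval_eq_one {p q : k[X]} (h : ∀ a ∈ S, p.eval a * q.eval (σ a) = 1) :
      aeval z p * aeval w q = 1 := by
    rw [aeval_germ, aeval_germ, ← Filter.Germ.coe_mul]
    exact congrArg _ (funext fun a : S ↦ by simpa [coe_aeval_eq_eval] using h a a.2)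
  obtain ⟨c, hc⟩ := exists_aeval_eq_aeval_C_mul hfg hfg' (aeval_mul_aeval_eq_one hf)
    (aeval_mul_aeval_eq_one hg)
  have eval_eq : ∀ᶠ a : S in U, g.eval (a : k) = (C c * f).eval (a : k) := by
    rw [aeval_germ, aeval_germ] at hc
    exact Filter.Germ.coe_eq.1 hc
  refine ⟨c, eq_of_infinite_eval_eq _ _ fun hfin ↦ ?_⟩
  exact Set.Finite.notMem_hyperfilter (hfin.preimage Subtype.val_injective.injOn) eval_eq

open ComplexConjugate in
theorem eval_mul_eval_map_conj_eq_one {p : ℂ[X]} {a : ℂ} (h : ‖p.eval a‖ = 1) :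
    p.eval a * (p.map (starRingEnd ℂ)).eval (conj a) = 1 := by
  rw [eval_map_apply, Complex.mul_conj, Complex.normSq_eq_norm_sq, h]
  simp

theorem exists_eq_C_mul_of_infinite_norm_eval_eq_one {f g : ℂ[X]}
    (hfg : f.natDegree = g.natDegree)
    (hS : {a | ‖f.eval a‖ = 1 ∧ ‖g.eval a‖ = 1}.Infinite) : ∃ c : ℂ, g = C c * f :=
  exists_eq_C_mul_of_infinite_eval_mul_eval_eq_one hfg
    (f' := f.map (starRingEnd ℂ)) (g' := g.map (starRingEnd ℂ)) (by simpa using hfg) hS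
    (starRingEnd ℂ) (fun _ ha ↦ eval_mul_eval_map_conj_eq_one ha.1)
    fun _ ha ↦ eval_mul_eval_map_conj_eq_one ha.2

theorem isOfFinOrder_of_mul_right {M : Type*} [CommMonoid M] {x y : M} (hxy : IsOfFinOrder (x * y))
    (hy : IsOfFinOrder y) : IsOfFinOrder x := by
  obtain ⟨u, rfl⟩ := hy.isUnit
  rw [← Units.mul_inv_cancel_right x u]
  exact hxy.mul (Units.isOfFinOrder_val.2 (Units.isOfFinOrder_val.1 hy).inv)

theorem exists_pow_eq_pow_of_infinite_isOfFinOrder_eval {f g : ℂ[X]} (hf : 0 < f.natDegree)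
    (hg : 0 < g.natDegree)
    (hS : {a | IsOfFinOrder (f.eval a) ∧ IsOfFinOrder (g.eval a)}.Infinite) :
    ∃ i j : ℕ, i ≠ 0 ∧ j ≠ 0 ∧ f ^ i = g ^ j := by
  obtain ⟨c, hc⟩ : ∃ c : ℂ, g ^ f.natDegree = C c * f ^ g.natDegree := by
    refine exists_eq_C_mul_of_infinite_norm_eval_eq_one (by simp [mul_comm]) (hS.mono fun a ha ↦ ?_)
    simp [ha.1.norm_eq_one, ha.2.norm_eq_one]
  obtain ⟨N, hN, hcN⟩ : ∃ N : ℕ, 0 < N ∧ c ^ N = 1 := by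
    obtain ⟨a, hfa, hga⟩ := hS.nonempty
    have hca : c * f.eval a ^ g.natDegree = g.eval a ^ f.natDegree := by
      simpa using (congrArg (eval a) hc).symm
    exact isOfFinOrder_iff_pow_eq_one.1 (isOfFinOrder_of_mul_right (hca ▸ hga.pow) hfa.pow)
  refine ⟨g.natDegree * N, f.natDegree * N, by positivity, by positivity, ?_⟩
  rw [pow_mul, pow_mul, hc, mul_pow, ← C_pow, hcN, C_1, one_mul]

theorem rootMultiplicity_pow_sub_C_pow {k : Type*} [CommRing k] [IsDomain k] {f : k[X]} {a : k}
    {n : ℕ} (hn : (n : k) ≠ 0) (hfa : f.eval a ≠ 0) :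
    (f ^ n - C (f.eval a ^ n)).rootMultiplicity a = (f - C (f.eval a)).rootMultiplicity a := by
  set q := ∑ i ∈ Finset.range n, f ^ i * C (f.eval a) ^ (n - 1 - i)
  have hfactor : f ^ n - C (f.eval a ^ n) = q * (f - C (f.eval a)) := by
    rw [C_pow, (Commute.all f _).geom_sum₂_mul]
  have hqa : q.eval a ≠ 0 := by
    have : q.eval a = n * f.eval a ^ (n - 1) := by
      simp only [q, eval_finsetSum, eval_mul, eval_pow, eval_C, geom_sum₂_self]
    rw [this]
    exact mul_ne_zero hn (pow_ne_zero _ hfa)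
  rcases eq_or_ne (f - C (f.eval a)) 0 with h₀ | h₀
  · rw [hfactor, h₀, mul_zero]
  · have hq₀ : q ≠ 0 := fun hq ↦ by simp [hq] at hqa
    rw [hfactor, rootMultiplicity_mul (mul_ne_zero hq₀ h₀), rootMultiplicity_eq_zero hqa, zero_add]

theorem prod_sub_C_eval_ne_zero {k : Type*} [CommRing k] [IsDomain k] {f : k[X]}
    (hf : 0 < f.natDegree) (S : Finset k) : ∏ a ∈ S, (f - C (f.eval a)) ≠ 0 :=
  Finset.prod_ne_zero_iff.2 fun a _ ↦ ne_zero_of_natDegree_gt (n := 0) (by rwa [natDegree_sub_C])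

theorem isOfFinOrder_eval_of_isRoot_of_dvd_pow_sub_one {k : Type*} [CommRing k] {d f : k[X]} {n : ℕ}
    (hn : 0 < n) (hd : d ∣ f ^ n - 1) {a : k} (ha : d.IsRoot a) : IsOfFinOrder (f.eval a) :=
  isOfFinOrder_iff_pow_eq_one.2 ⟨n, hn, by simpa [sub_eq_zero] using ha.dvd hd⟩

section IsAlgClosed

variable {k : Type*} [Field k] [IsAlgClosed k]

theorem dvd_of_forall_rootMultiplicity_le {p q : k[X]} (hp : p ≠ 0)
    (h : ∀ a, p.IsRoot a → p.rootMultiplicity a ≤ q.rootMultiplicity a) : p ∣ q := by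
  classical
  refine (IsAlgClosed.splits p).dvd_of_roots_le_roots hp (Multiset.le_iff_count.2 fun a ↦ ?_)
  rw [count_roots, count_roots]
  by_cases ha : p.IsRoot a
  · exact h a ha
  · simp [rootMultiplicity_eq_zero ha]

theorem dvd_prod_sub_C_eval_of_dvd_pow_sub_one {d f : k[X]}
    (hf : 0 < f.natDegree) {n : ℕ} (hn : (n : k) ≠ 0) (hd : d ∣ f ^ n - 1) {S : Finset k}
    (hS : ∀ a, d.IsRoot a → a ∈ S) : d ∣ ∏ a ∈ S, (f - C (f.eval a)) := by
  have hn₀ : n ≠ 0 := by rintro rfl; simp at hn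
  have hfn : f ^ n - 1 ≠ 0 := by
    refine ne_zero_of_natDegree_gt (n := 0) ?_
    rw [← C_1, natDegree_sub_C, natDegree_pow]
    positivity
  refine dvd_of_forall_rootMultiplicity_le (ne_zero_of_dvd_ne_zero hfn hd) fun a ha ↦ ?_
  have hfa : f.eval a ^ n = 1 := by simpa [sub_eq_zero] using ha.dvd hd
  calc d.rootMultiplicity a ≤ (f ^ n - 1).rootMultiplicity a :=
        rootMultiplicity_le_rootMultiplicity_of_dvd hfn hd a
    _ = (f - C (f.eval a)).rootMultiplicity a := by
        rw [← rootMultiplicity_pow_sub_C_pow hn fun h ↦ by simp [h, hn₀] at hfa, hfa, C_1]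
    _ ≤ (∏ a ∈ S, (f - C (f.eval a))).rootMultiplicity a :=
        rootMultiplicity_le_rootMultiplicity_of_dvd (prod_sub_C_eval_ne_zero hf S)
          (Finset.dvd_prod_of_mem _ (hS a ha)) a

end IsAlgClosed

/-- The Ailon–Rudnick theorem, generalized form (1.2): for multiplicatively
independent nonconstant `f, g ∈ ℂ[T]` there is a nonzero `h ∈ ℂ[T]` with
`gcd(fⁿ − 1, gᵐ − 1) ∣ h` for all `n, m ≥ 1`. -/
theorem stmt_14 (f g : Polynomial ℂ)
    (hf : 0 < f.natDegree) (hg : 0 < g.natDegree)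
    (hind : ¬ ∃ (ν₁ ν₂ : ℤ), (ν₁, ν₂) ≠ (0, 0) ∧
      (algebraMap (Polynomial ℂ) (RatFunc ℂ) f) ^ ν₁ *
        (algebraMap (Polynomial ℂ) (RatFunc ℂ) g) ^ ν₂ = 1) :
    ∃ h : Polynomial ℂ, h ≠ 0 ∧ ∀ n m : ℕ, 1 ≤ n → 1 ≤ m →
      EuclideanDomain.gcd (f ^ n - 1) (g ^ m - 1) ∣ h := by
  have hS : {a | IsOfFinOrder (f.eval a) ∧ IsOfFinOrder (g.eval a)}.Finite := by
    refine Set.not_infinite.1 fun hS ↦ hind ?_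
    obtain ⟨i, j, hi, -, hij⟩ := exists_pow_eq_pow_of_infinite_isOfFinOrder_eval hf hg hS
    refine MultiplicativelyDependent.of_pow_eq_pow (i := i) (j := j) ?_ hi ?_
    · exact RatFunc.algebraMap_ne_zero (ne_zero_of_natDegree_gt hg)
    · rw [← map_pow, hij, map_pow]
  refine ⟨∏ a ∈ hS.toFinset, (f - C (f.eval a)), prod_sub_C_eval_ne_zero hf _, fun n m hn hm ↦ ?_⟩
  have gcd_dvd_left := EuclideanDomain.gcd_dvd_left (f ^ n - 1) (g ^ m - 1)
  have gcd_dvd_right := EuclideanDomain.gcd_dvd_right (f ^ n - 1) (g ^ m - 1)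
  refine dvd_prod_sub_C_eval_of_dvd_pow_sub_one hf (Nat.cast_ne_zero.2 (by lia)) gcd_dvd_left
    fun a ha ↦ hS.mem_toFinset.2 ⟨?_, ?_⟩
  · exact isOfFinOrder_eval_of_isRoot_of_dvd_pow_sub_one hn gcd_dvd_left ha
  · exact isOfFinOrder_eval_of_isRoot_of_dvd_pow_sub_one hm gcd_dvd_right ha
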